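/- If for some term i_r of the sequence i, the configuration conf(i) contains b_r + 1 beads stacked consecutively on the runner i_r above position r, where b_r is the r-antigravity bound, then 1_i = 0 in R_ν^Λ (type A_∞). -/

import Mathlib

namespace KLRPaper


/-- The sequence obtained from `i` by swapping the entries in positions `r` and `r+1`
(0-indexed); identity if `r+1` is out of range. -/
def swapSeq {I : Type} {m : ℕ} (r : ℕ) (i : Fin m → I) : Fin m → I :=
  fun k =>
    if h : r + 1 < m then
      i (Equiv.swap (⟨r, Nat.lt_of_succ_lt h⟩ : Fin m) (⟨r + 1, h⟩ : Fin m) k)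
    else i k

/-- The Khovanov–Lauda–Rouquier algebra of a simply-laced quiver with vertex set `I`
and adjacency relation `adj`, on `m` strands, presented by its generators
(idempotents `e i`, dots `x r i`, crossings `δ r i`) and the KLR relations. -/
structure KLR (I : Type) [DecidableEq I] (adj : I → I → Prop) (m : ℕ)
    (A : Type) [Ring A] where
  e : (Fin m → I) → A
  x : Fin m → (Fin m → I) → A
  δ : ℕ → (Fin m → I) → A
  e_mul_e : ∀ i j, e i * e j = if i = j then e i else 0
  e_mul_x : ∀ r i, e i * x r i = x r i
  x_mul_e : ∀ r i, x r i * e i = x r i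
  x_mul_x : ∀ r s i, x r i * x s i = x s i * x r i
  e_mul_δ : ∀ (r : ℕ) (i : Fin m → I), e (swapSeq r i) * δ r i = δ r i
  δ_mul_e : ∀ (r : ℕ) (i : Fin m → I), δ r i * e i = δ r i
  δδ_same : ∀ (r : ℕ) (h : r + 1 < m) (i : Fin m → I),
    i ⟨r, Nat.lt_of_succ_lt h⟩ = i ⟨r + 1, h⟩ →
    δ r (swapSeq r i) * δ r i = 0
  δδ_orth : ∀ (r : ℕ) (h : r + 1 < m) (i : Fin m → I),
    i ⟨r, Nat.lt_of_succ_lt h⟩ ≠ i ⟨r + 1, h⟩ →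
    ¬ adj (i ⟨r, Nat.lt_of_succ_lt h⟩) (i ⟨r + 1, h⟩) →
    δ r (swapSeq r i) * δ r i = e i
  δδ_adj : ∀ (r : ℕ) (h : r + 1 < m) (i : Fin m → I),
    adj (i ⟨r, Nat.lt_of_succ_lt h⟩) (i ⟨r + 1, h⟩) →
    δ r (swapSeq r i) * δ r i = x ⟨r, Nat.lt_of_succ_lt h⟩ i + x ⟨r + 1, h⟩ i
  δx_far : ∀ (r : ℕ) (s : Fin m) (i : Fin m → I), s.val ≠ r → s.val ≠ r + 1 →
    δ r i * x s i = x s (swapSeq r i) * δ r i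
  δx_diff1 : ∀ (r : ℕ) (h : r + 1 < m) (i : Fin m → I),
    i ⟨r, Nat.lt_of_succ_lt h⟩ ≠ i ⟨r + 1, h⟩ →
    δ r i * x ⟨r, Nat.lt_of_succ_lt h⟩ i = x ⟨r + 1, h⟩ (swapSeq r i) * δ r i
  δx_diff2 : ∀ (r : ℕ) (h : r + 1 < m) (i : Fin m → I),
    i ⟨r, Nat.lt_of_succ_lt h⟩ ≠ i ⟨r + 1, h⟩ →
    δ r i * x ⟨r + 1, h⟩ i = x ⟨r, Nat.lt_of_succ_lt h⟩ (swapSeq r i) * δ r i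
  δx_same1 : ∀ (r : ℕ) (h : r + 1 < m) (i : Fin m → I),
    i ⟨r, Nat.lt_of_succ_lt h⟩ = i ⟨r + 1, h⟩ →
    δ r i * x ⟨r, Nat.lt_of_succ_lt h⟩ i - x ⟨r + 1, h⟩ (swapSeq r i) * δ r i = e i
  δx_same2 : ∀ (r : ℕ) (h : r + 1 < m) (i : Fin m → I),
    i ⟨r, Nat.lt_of_succ_lt h⟩ = i ⟨r + 1, h⟩ →
    x ⟨r, Nat.lt_of_succ_lt h⟩ (swapSeq r i) * δ r i - δ r i * x ⟨r + 1, h⟩ i = e i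
  braid_easy : ∀ (r : ℕ) (h : r + 2 < m) (i : Fin m → I),
    ¬ (i ⟨r, by omega⟩ = i ⟨r + 2, h⟩ ∧ adj (i ⟨r, by omega⟩) (i ⟨r + 1, by omega⟩)) →
    δ r (swapSeq (r + 1) (swapSeq r i)) * δ (r + 1) (swapSeq r i) * δ r i =
      δ (r + 1) (swapSeq r (swapSeq (r + 1) i)) * δ r (swapSeq (r + 1) i) * δ (r + 1) i
  braid_hard : ∀ (r : ℕ) (h : r + 2 < m) (i : Fin m → I),
    i ⟨r, by omega⟩ = i ⟨r + 2, h⟩ → adj (i ⟨r, by omega⟩) (i ⟨r + 1, by omega⟩) →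
    δ r (swapSeq (r + 1) (swapSeq r i)) * δ (r + 1) (swapSeq r i) * δ r i -
      δ (r + 1) (swapSeq r (swapSeq (r + 1) i)) * δ r (swapSeq (r + 1) i) * δ (r + 1) i
      = e i

/-- The cyclotomic quotient `R_ν^Λ` of the KLR algebra at the dominant weight
`Λ = Σ λ_i · i` (a finitely supported function `I →₀ ℕ`): it additionally satisfies
`x_{1,i}^{λ_{i₁}} 1_i = 0` for every sequence `i`. -/
structure CycKLR (I : Type) [DecidableEq I] (adj : I → I → Prop) (m : ℕ)
    (A : Type) [Ring A] (Λ : I →₀ ℕ) extends KLR I adj m A where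
  cyc : ∀ (h : 0 < m) (i : Fin m → I), x ⟨0, h⟩ i ^ Λ (i ⟨0, h⟩) * e i = 0



/-- Adjacency for the type `A_∞` quiver with vertex set `ℤ`. -/
def adjZ (u v : ℤ) : Prop := (u - v).natAbs = 1

/-- The heap covering relation for the bead-and-runner diagram of the sequence `l`
(type `A_∞`): bead `a` is directly below bead `b` if it was placed earlier and its
runner is at distance at most one from the runner of `b`. -/
def HeapRel (l : List ℤ) (a b : ℕ) : Prop :=
  a < b ∧ b < l.length ∧ (l.getD a 0 - l.getD b 0).natAbs ≤ 1

/-- Bead `k` is trapped below the anchored bead `r` in antigravity: there is a chain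
of beads from `k` up to `r`, each step going to a later bead on the same or an
adjacent runner. -/
def Trapped (l : List ℤ) (r k : ℕ) : Prop :=
  Relation.ReflTransGen (HeapRel l) k r

open Classical in
/-- The support of the `r`-stable antigravity configuration `a_r(l)`: the set of
runners carrying a bead trapped below the anchored bead `r`. -/
noncomputable def trappedRunners (l : List ℤ) (r : ℕ) : Finset ℤ :=
  ((Finset.range l.length).filter fun k => Trapped l r k).image fun k => l.getD k 0

/-- The `r`-antigravity bound `b_r = Σ_{j ∈ Supp(a_r(l))} λ_j`. -/
noncomputable def agBound (Λ : ℤ →₀ ℕ) (l : List ℤ) (r : ℕ) : ℕ :=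
  ∑ j ∈ trappedRunners l r, Λ j

/-!
Polynomials in the dots that annihilate `1_q` form an ideal `I_q`. For a runner `c` and an initial
segment of the sequence `q`, let `P_c` be the monic polynomial whose roots are the dots (up to sign)
on the beads of runner `c`. Modulo `I_q`, the polynomial `P_c` divides `X ^ N * P_{c-1}`, where `N`
is the sum of `λ_t` over the runners `t ≥ c` occurring in the segment: the KLR relations carry this
divisibility through moves that reduce every word to descending words `c + k - 1, …, c`, and there
it amounts to a power of the last dot, which the cyclotomic relation kills. Reflecting the quiver
exchanges the roles of `c` and `c - 1`.

Before bead `r`, with `c = q r`, the two divisibilities compose to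
`P_c * (X - x_r) ∣ X ^ (N + N') * P_c`. Cancelling the monic `P_c` gives `x_r ^ b_r 1_q = 0`, first
when only trapped beads precede `r`, and then in general, since the other beads can be moved out of
the way past distant runners. Along a stack of equal beads the divided differences then turn
`X - x_r ∣ X ^ b_r` into `∏ (X - x_k) ∣ X ^ b_r`. For `b_r + 1` beads, this is a monic polynomial
of degree `b_r + 1` dividing one of degree `b_r`, so `1 ∈ I_q`, that is, `1_q = 0`.
-/

open MvPolynomial Equiv

section CommutingEvaluation

variable {ι R A : Type*} [CommRing R] [Ring A] [Algebra R A]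

open scoped IsMulCommutative in
/-- Evaluation of commutative polynomials at pairwise commuting elements of a ring that need not
be commutative; it is computed in the (commutative) subalgebra these elements generate. -/
noncomputable def evalCommuting (y : ι → A) (hy : ∀ i j, Commute (y i) (y j)) :
    MvPolynomial ι R →ₐ[R] A :=
  letI : IsMulCommutative (Algebra.adjoin R (Set.range y)) :=
    Algebra.isMulCommutative_adjoin R (by rintro _ ⟨i, rfl⟩ _ ⟨j, rfl⟩; exact hy i j)
  (Algebra.adjoin R (Set.range y)).val.comp
    (aeval fun i => (⟨y i, Algebra.subset_adjoin ⟨i, rfl⟩⟩ : Algebra.adjoin R (Set.range y)))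

@[simp]
lemma evalCommuting_X (y : ι → A) (hy : ∀ i j, Commute (y i) (y j)) (i : ι) :
    evalCommuting (R := R) y hy (X i) = y i := by
  simp [evalCommuting]

lemma commute_evalCommuting {y : ι → A} {hy : ∀ i j, Commute (y i) (y j)} {ε : A}
    (hε : ∀ i, Commute ε (y i)) (f : MvPolynomial ι R) : Commute ε (evalCommuting y hy f) := by
  induction f using MvPolynomial.induction_on with
  | C r => rw [← algebraMap_eq, AlgHom.commutes]; exact Algebra.commutes' r ε |>.symm
  | add f g hf hg => rw [map_add]; exact hf.add_right hg
  | mul_X f i hf => rw [map_mul, evalCommuting_X]; exact hf.mul_right (hε i)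

lemma mul_evalCommuting {y y' : ι → A} {hy : ∀ i j, Commute (y i) (y j)}
    {hy' : ∀ i j, Commute (y' i) (y' j)} {σ : ι → ι} {d : A} (hd : ∀ i, d * y i = y' (σ i) * d)
    (f : MvPolynomial ι R) :
    d * evalCommuting y hy f = evalCommuting y' hy' (rename σ f) * d := by
  induction f using MvPolynomial.induction_on with
  | C r => rw [rename_C, ← algebraMap_eq, AlgHom.commutes, AlgHom.commutes, Algebra.commutes]
  | add f g hf hg => simp only [map_add, mul_add, add_mul, hf, hg]
  | mul_X f i hf =>
    rw [map_mul, evalCommuting_X, ← mul_assoc, hf, mul_assoc, hd, map_mul, map_mul, rename_X,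
      evalCommuting_X, mul_assoc]

lemma exists_mul_evalCommuting_eq_add {y : ι → A} {hy : ∀ i j, Commute (y i) (y j)} {σ : ι → ι}
    {d ε : A} {c : ι → R} {D : MvPolynomial ι R} (hD : ∀ i, X i - X (σ i) = D * C (c i))
    (hε : ∀ i, Commute ε (y i)) (hd : ∀ i, d * y i = y (σ i) * d + c i • ε)
    (f : MvPolynomial ι R) :
    ∃ g, f - rename σ f = D * g ∧ d * evalCommuting y hy f =
      evalCommuting y hy (rename σ f) * d + evalCommuting y hy g * ε := by
  induction f using MvPolynomial.induction_on with
  | C r =>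
    refine ⟨0, by simp, ?_⟩
    rw [rename_C, ← algebraMap_eq, AlgHom.commutes, Algebra.commutes, map_zero, zero_mul, add_zero]
  | add f₁ f₂ h₁ h₂ =>
    obtain ⟨g₁, hg₁, he₁⟩ := h₁
    obtain ⟨g₂, hg₂, he₂⟩ := h₂
    refine ⟨g₁ + g₂, by rw [map_add, mul_add, ← hg₁, ← hg₂]; ring, ?_⟩
    simp only [map_add, mul_add, add_mul, he₁, he₂]
    abel
  | mul_X f i hf =>
    obtain ⟨g, hg, he⟩ := hf
    have hεi : ε * y i = y i * ε := hε i
    refine ⟨rename σ f * C (c i) + g * X i, ?_, ?_⟩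
    · rw [map_mul, rename_X]
      linear_combination X i * hg + rename σ f * hD i
    · simp only [map_mul, map_add, rename_X, evalCommuting_X]
      rw [← mul_assoc, he, add_mul, mul_assoc _ d, hd, mul_assoc _ ε, hεi, ← algebraMap_eq,
        AlgHom.commutes, Algebra.smul_def]
      noncomm_ring

end CommutingEvaluation

/-! ### Annihilators of the idempotents -/

lemma comp_swap_eq_self {α I : Type*} [DecidableEq α] {q : α → I} {a b : α} (h : q a = q b) :
    q ∘ swap a b = q :=
  funext fun k => by
    rw [Function.comp_apply, swap_apply_def]
    split_ifs with ha hb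
    exacts [ha ▸ h.symm, hb ▸ h, rfl]

lemma swapSeq_eq_comp {I : Type} {m : ℕ} {a b : Fin m} (h : a.val + 1 = b.val) (q : Fin m → I) :
    swapSeq a q = q ∘ swap a b := by
  obtain ⟨_, hb⟩ := b
  obtain rfl := h
  funext k
  simp [swapSeq, hb]

/-- The annihilators of the idempotents of a cyclotomic quotient `R_ν^Λ` of type `A_∞`, abstracted
from the algebra: `ideal q` stands for the polynomials `f` in the dots with `f 1_q = 0`. The `r`-th
variable stands for the dot `x_r 1_q` multiplied by `(-1)^{q r}`, so that the relation
`δ² 1_q = (x_a + x_b) 1_q` on adjacent runners involves the difference `X a - X b`. -/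
structure AnnihilatorSystem (m : ℕ) (Λ : ℤ → ℕ) where
  ideal : (Fin m → ℤ) → Ideal (MvPolynomial (Fin m) ℤ)
  far {q : Fin m → ℤ} {a b : Fin m} {f : MvPolynomial (Fin m) ℤ} : a.val + 1 = b.val →
    2 ≤ (q a - q b).natAbs → rename (swap a b) f ∈ ideal (q ∘ swap a b) → f ∈ ideal q
  adjacent {q : Fin m → ℤ} {a b : Fin m} {f : MvPolynomial (Fin m) ℤ} : a.val + 1 = b.val →
    (q a - q b).natAbs = 1 → rename (swap a b) f ∈ ideal (q ∘ swap a b) →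
    (X a - X b) * f ∈ ideal q
  same {q : Fin m → ℤ} {a b : Fin m} {f g : MvPolynomial (Fin m) ℤ} : a.val + 1 = b.val →
    q a = q b → f ∈ ideal q → f - rename (swap a b) f = (X a - X b) * g → g ∈ ideal q
  braid {q : Fin m → ℤ} {a b c : Fin m} {f : MvPolynomial (Fin m) ℤ} : a.val + 1 = b.val →
    b.val + 1 = c.val → q a = q c → (q a - q b).natAbs = 1 →
    rename (swap a b) f ∈ ideal (q ∘ swap a b) → rename (swap b c) f ∈ ideal (q ∘ swap b c) →
    f ∈ ideal q
  cyclotomic {q : Fin m → ℤ} {a : Fin m} : a.val = 0 → X a ^ Λ (q a) ∈ ideal q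

namespace KLR

variable {m : ℕ} {A : Type} [Ring A] (K : KLR ℤ adjZ m A) {q : Fin m → ℤ} {a b : Fin m}

/-- The dot `x_r 1_q` with the sign `(-1)^{q r}`. -/
def signedDot (q : Fin m → ℤ) (r : Fin m) : A := (q r).negOnePow • K.x r q

lemma commute_signedDot (q : Fin m → ℤ) (r s : Fin m) :
    Commute (K.signedDot q r) (K.signedDot q s) := by
  simp only [Commute, SemiconjBy, signedDot, smul_mul_assoc, mul_smul_comm, K.x_mul_x r s]
  rw [smul_comm]

lemma commute_e_signedDot (q : Fin m → ℤ) (r : Fin m) : Commute (K.e q) (K.signedDot q r) := by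
  simp only [Commute, SemiconjBy, signedDot, smul_mul_assoc, mul_smul_comm, K.e_mul_x, K.x_mul_e]

/-- The value of a polynomial at the signed dots on the sequence `q`. -/
noncomputable def evalDots (q : Fin m → ℤ) : MvPolynomial (Fin m) ℤ →ₐ[ℤ] A :=
  evalCommuting (K.signedDot q) (K.commute_signedDot q)

lemma commute_e_evalDots (q : Fin m → ℤ) (f : MvPolynomial (Fin m) ℤ) :
    Commute (K.e q) (K.evalDots q f) :=
  commute_evalCommuting (K.commute_e_signedDot q) f

lemma δ_mul_signedDot_of_ne (h : a.val + 1 = b.val) (hq : q a ≠ q b) (r : Fin m) :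
    K.δ a q * K.signedDot q r = K.signedDot (q ∘ swap a b) (swap a b r) * K.δ a q := by
  simp only [signedDot, mul_smul_comm, smul_mul_assoc, Function.comp_apply, swap_apply_self]
  congr 1
  rw [← swapSeq_eq_comp h]
  obtain ⟨_, hb⟩ := b
  obtain rfl := h
  by_cases hra : r = a
  · rw [hra, swap_apply_left]
    exact K.δx_diff1 a _ q hq
  by_cases hrb : r = ⟨a + 1, hb⟩
  · rw [hrb, swap_apply_right]
    exact K.δx_diff2 a _ q hq
  · rw [swap_apply_of_ne_of_ne hra hrb]
    exact K.δx_far a r q (by simpa [Fin.ext_iff] using hra) (by simpa [Fin.ext_iff] using hrb)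

lemma δ_mul_signedDot_of_eq (h : a.val + 1 = b.val) (hq : q a = q b) (r : Fin m) :
    K.δ a q * K.signedDot q r = K.signedDot q (swap a b r) * K.δ a q +
      (if r = a then 1 else if r = b then -1 else 0 : ℤ) • ((q a).negOnePow • K.e q) := by
  have hqs : swapSeq a q = q := by rw [swapSeq_eq_comp h, comp_swap_eq_self hq]
  obtain ⟨_, hb⟩ := b
  obtain rfl := h
  have hδa := K.δx_same1 a _ q hq
  have hδb := K.δx_same2 a _ q hq
  rw [hqs] at hδa hδb
  by_cases hra : r = a
  · simp only [hra, signedDot, mul_smul_comm, smul_mul_assoc, swap_apply_left, if_true, one_smul,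
      ← hq, ← smul_add]
    rw [← hδa, add_sub_cancel]
  by_cases hrb : r = ⟨a + 1, hb⟩
  · rw [if_neg hra, if_pos hrb, hrb, swap_apply_right, signedDot, signedDot, ← hq, neg_one_smul,
      mul_smul_comm, smul_mul_assoc, ← sub_eq_add_neg, ← smul_sub, ← hδb, sub_sub_cancel]
  · rw [if_neg hra, if_neg hrb, zero_smul, add_zero, swap_apply_of_ne_of_ne hra hrb, signedDot,
      mul_smul_comm, smul_mul_assoc, K.δx_far a r q (by simpa [Fin.ext_iff] using hra)
        (by simpa [Fin.ext_iff] using hrb), hqs]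

/-- The polynomials in the signed dots which annihilate the idempotent `1_q`. -/
def annihilator (q : Fin m → ℤ) : Ideal (MvPolynomial (Fin m) ℤ) where
  carrier := {f | K.e q * K.evalDots q f = 0}
  add_mem' {f g} hf hg := by
    rw [Set.mem_ofPred_eq] at hf hg ⊢
    rw [map_add, mul_add, hf, hg, add_zero]
  zero_mem' := by simp
  smul_mem' g f hf := by
    rw [Set.mem_ofPred_eq] at hf ⊢
    rw [smul_eq_mul, mul_comm, map_mul, ← mul_assoc, hf, zero_mul]

variable {f g : MvPolynomial (Fin m) ℤ}

lemma mem_annihilator : f ∈ K.annihilator q ↔ K.e q * K.evalDots q f = 0 := Iff.rfl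

lemma δ_mul_evalDots_eq_zero (h : a.val + 1 = b.val) (hq : q a ≠ q b)
    (hf : rename (swap a b) f ∈ K.annihilator (q ∘ swap a b)) :
    K.δ a q * K.evalDots q f = 0 := by
  rw [evalDots, mul_evalCommuting (hy' := K.commute_signedDot _) (K.δ_mul_signedDot_of_ne h hq),
    ← evalDots, ← K.e_mul_δ, swapSeq_eq_comp h, ← mul_assoc,
    ← (K.commute_e_evalDots _ _).eq, K.mem_annihilator.1 hf, zero_mul]

lemma mem_annihilator_of_far (h : a.val + 1 = b.val) (hq : 2 ≤ (q a - q b).natAbs)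
    (hf : rename (swap a b) f ∈ K.annihilator (q ∘ swap a b)) :
    f ∈ K.annihilator q := by
  have hne : q a ≠ q b := fun hab => by simp [hab] at hq
  have hδ := K.δ_mul_evalDots_eq_zero h hne hf
  obtain ⟨_, hb⟩ := b
  obtain rfl := h
  rw [mem_annihilator, ← K.δδ_orth a _ q hne
    (fun hadj : (q a - q _).natAbs = 1 => by omega), mul_assoc, hδ, mul_zero]

lemma mul_mem_annihilator_of_adjacent (h : a.val + 1 = b.val) (hq : (q a - q b).natAbs = 1)
    (hf : rename (swap a b) f ∈ K.annihilator (q ∘ swap a b)) :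
    (X a - X b) * f ∈ K.annihilator q := by
  have hδ := K.δ_mul_evalDots_eq_zero h (fun hab => by simp [hab] at hq) hf
  have hsign : (q b).negOnePow = -(q a).negOnePow := by
    obtain hb | hb : q b = q a + 1 ∨ q b = q a - 1 := by omega
    · rw [hb, Int.negOnePow_succ]
    · rw [hb, Int.negOnePow_sub, Int.negOnePow_one, mul_neg_one]
  have hdots : K.signedDot q a - K.signedDot q b =
      (q a).negOnePow • (K.δ a (swapSeq a q) * K.δ a q) := by
    obtain ⟨_, hb⟩ := b
    obtain rfl := h
    rw [K.δδ_adj a _ q hq, signedDot, signedDot, hsign, Units.neg_smul, sub_neg_eq_add, smul_add]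
  rw [mem_annihilator, map_mul, map_sub, evalDots, evalCommuting_X, evalCommuting_X, ← evalDots,
    hdots, smul_mul_assoc, mul_assoc, hδ, mul_zero, smul_zero, mul_zero]

lemma exists_δ_mul_evalDots_eq_add (h : a.val + 1 = b.val) (hq : q a = q b)
    (f : MvPolynomial (Fin m) ℤ) :
    ∃ g, f - rename (swap a b) f = (X a - X b) * g ∧ K.δ a q * K.evalDots q f =
      K.evalDots q (rename (swap a b) f) * K.δ a q +
        K.evalDots q g * ((q a).negOnePow • K.e q) := by
  have hab : a ≠ b := fun hab => by simp [hab] at h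
  refine exists_mul_evalCommuting_eq_add
    (c := fun r => if r = a then 1 else if r = b then -1 else 0)
    (fun r => ?_) (fun r => (K.commute_e_signedDot q r).smul_left _)
    (K.δ_mul_signedDot_of_eq h hq) f
  by_cases hra : r = a
  · simp [hra]
  by_cases hrb : r = b
  · simp [hrb, hab.symm]
  · simp [hra, hrb, swap_apply_of_ne_of_ne]

lemma mem_annihilator_of_same (h : a.val + 1 = b.val) (hq : q a = q b)
    (hf : f ∈ K.annihilator q)
    (hg : f - rename (swap a b) f = (X a - X b) * g) : g ∈ K.annihilator q := by
  have hab : a ≠ b := fun hab => by simp [hab] at h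
  have hqs : swapSeq a q = q := by rw [swapSeq_eq_comp h, comp_swap_eq_self hq]
  have hδδ : K.δ a q * K.δ a q = 0 := by
    obtain ⟨_, hb⟩ := b
    obtain rfl := h
    simpa only [hqs] using K.δδ_same a _ q hq
  have heδ : K.e q * K.δ a q = K.δ a q := by simpa only [hqs] using K.e_mul_δ a q
  obtain ⟨g', hg', heval⟩ := K.exists_δ_mul_evalDots_eq_add h hq f
  obtain rfl : g = g' := mul_left_cancel₀ (sub_ne_zero.2 (X_injective.ne hab)) (hg ▸ hg')
  have hδf : K.δ a q * K.evalDots q f = 0 := by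
    rw [← K.δ_mul_e, mul_assoc, K.mem_annihilator.1 hf, mul_zero]
  have hfδ : K.evalDots q f * K.δ a q = 0 := by
    rw [← heδ, ← mul_assoc, ← (K.commute_e_evalDots q f).eq, K.mem_annihilator.1 hf, zero_mul]
  have hgδ : K.evalDots q g * K.δ a q = 0 := by
    have hδ := congrArg (· * K.δ a q) heval
    simp only [hδf, zero_mul, add_mul, mul_assoc, hδδ, mul_zero, zero_add, smul_mul_assoc, heδ,
      mul_smul_comm] at hδ
    rwa [eq_comm, smul_eq_zero_iff_eq] at hδ
  have hsymm : K.evalDots q (rename (swap a b) f) * K.δ a q = 0 := by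
    rw [show rename (swap a b) f = f - (X a - X b) * g by rw [← hg]; ring, map_sub, map_mul,
      sub_mul, mul_assoc, hgδ, hfδ, mul_zero, sub_zero]
  rw [hδf, hsymm, zero_add, mul_smul_comm, eq_comm, smul_eq_zero_iff_eq] at heval
  rw [mem_annihilator, (K.commute_e_evalDots q g).eq, heval]

lemma mem_annihilator_of_braid {c : Fin m} (hab : a.val + 1 = b.val) (hbc : b.val + 1 = c.val)
    (hac : q a = q c) (hq : (q a - q b).natAbs = 1)
    (hf : rename (swap a b) f ∈ K.annihilator (q ∘ swap a b))
    (hf' : rename (swap b c) f ∈ K.annihilator (q ∘ swap b c)) : f ∈ K.annihilator q := by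
  have hne : q a ≠ q b := fun h => by simp [h] at hq
  have hδa := K.δ_mul_evalDots_eq_zero hab hne hf
  have hδb := K.δ_mul_evalDots_eq_zero hbc (hac ▸ hne.symm) hf'
  rw [← hab] at hδb
  obtain ⟨_, hb⟩ := b
  obtain rfl := hab
  obtain ⟨_, hc⟩ := c
  obtain rfl := hbc
  rw [mem_annihilator, ← K.braid_hard a _ q hac hq, sub_mul, mul_assoc, hδa,
    mul_assoc _ (K.δ (a + 1) q), hδb, mul_zero, mul_zero, sub_zero]

end KLR

/-- The annihilator ideals of the idempotents in a cyclotomic quotient. -/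
def CycKLR.annihilatorSystem {m : ℕ} {A : Type} [Ring A] {Λ : ℤ →₀ ℕ} (K : CycKLR ℤ adjZ m A Λ) :
    AnnihilatorSystem m Λ where
  ideal := K.annihilator
  far := K.mem_annihilator_of_far
  adjacent := K.mul_mem_annihilator_of_adjacent
  same := K.mem_annihilator_of_same
  braid := K.mem_annihilator_of_braid
  cyclotomic {q a} ha := by
    obtain ⟨_, h0⟩ := a
    obtain rfl := ha
    rw [K.mem_annihilator, map_pow, KLR.evalDots, evalCommuting_X, KLR.signedDot, smul_pow,
      mul_smul_comm, (Commute.pow_right (by rw [Commute, SemiconjBy, K.e_mul_x, K.x_mul_e]) _).eq,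
      K.cyc h0 q, smul_zero]

/-! ### Moving beads past distant runners -/

lemma swap_lt_swap {m : ℕ} {a b : Fin m} (h : a.val + 1 = b.val) {j k : Fin m} (hjk : j < k)
    (hne : ¬(j = a ∧ k = b)) : swap a b j < swap a b k := by
  rw [swap_apply_def, swap_apply_def]
  split_ifs <;> grind

lemma eq_Ico_of_pred_mem {l : ℕ} {V : Finset ℕ} (hl : ∀ k ∈ V, l ≤ k)
    (hpred : ∀ k, l ≤ k → k + 1 ∈ V → k ∈ V) : V = Finset.Ico l (l + V.card) := by
  obtain rfl | hV := V.eq_empty_or_nonempty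
  · simp
  have hmax : V.max' hV ∈ V := V.max'_mem hV
  have heq : V = Finset.Ico l (V.max' hV + 1) := by
    ext k
    rw [Finset.mem_Ico, Nat.lt_succ_iff]
    refine ⟨fun hk => ⟨hl k hk, V.le_max' k hk⟩, fun ⟨hlk, hk⟩ => ?_⟩
    exact Nat.decreasingInduction' (P := (· ∈ V)) (fun j _ hkj => hpred j (hlk.trans hkj)) hk hmax
  have hcard := congrArg Finset.card heq
  rw [Nat.card_Ico] at hcard
  rwa [show l + V.card = V.max' hV + 1 by have := hl _ hmax; omega]

lemma mem_iff_lt_add_card {m l : ℕ} {U : Finset (Fin m)} (hl : ∀ k ∈ U, l ≤ k.val)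
    (hpred : ∀ a b : Fin m, a.val + 1 = b.val → l ≤ a → b ∈ U → a ∈ U) (j : Fin m) :
    j ∈ U ↔ l ≤ j.val ∧ j.val < l + U.card := by
  have hIco : U.map Fin.valEmbedding = Finset.Ico l (l + (U.map Fin.valEmbedding).card) := by
    refine eq_Ico_of_pred_mem (by simpa using hl) fun k hlk hk => ?_
    obtain ⟨b, hb, hbk⟩ := Finset.mem_map.1 hk
    rw [Fin.valEmbedding_apply] at hbk
    have hkm : k < m := by omega
    exact Finset.mem_map.2 ⟨⟨k, hkm⟩, hpred ⟨k, hkm⟩ b hbk.symm hlk hb, rfl⟩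
  rw [← Finset.mem_map' Fin.valEmbedding, hIco, Finset.card_map, Finset.mem_Ico,
    Fin.valEmbedding_apply]

/-- The set `U` of positions `≥ l` contains, with each of its members, every earlier position `≥ l`
whose bead lies on the same or an adjacent runner. The beads in `U` can then be moved down past all
other beads of index at least `l`. -/
def HeapClosed {m : ℕ} (q : Fin m → ℤ) (l : ℕ) (U : Finset (Fin m)) : Prop :=
  ∀ k ∈ U, l ≤ k.val ∧ ∀ j : Fin m, l ≤ j.val → j < k → (q j - q k).natAbs ≤ 1 → j ∈ U

lemma HeapClosed.map_swap {m l : ℕ} {q : Fin m → ℤ} {U : Finset (Fin m)} (hU : HeapClosed q l U)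
    {a b : Fin m} (h : a.val + 1 = b.val) (hla : l ≤ a) (ha : a ∉ U) :
    HeapClosed (q ∘ swap a b) l (U.map (swap a b).toEmbedding) := by
  have hle : ∀ k : Fin m, l ≤ k.val → l ≤ (swap a b k).val := fun k hk => by
    rw [swap_apply_def]
    split_ifs <;> omega
  intro k hk
  rw [Finset.mem_map_equiv, symm_swap] at hk
  refine ⟨by simpa only [swap_apply_self] using hle _ (hU _ hk).1, fun j hlj hjk hq => ?_⟩
  rw [Finset.mem_map_equiv, symm_swap]
  refine (hU _ hk).2 _ (hle j hlj) (lt_of_not_ge fun hkj => ?_) hq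
  obtain heq | hlt := hkj.eq_or_lt
  · exact hjk.ne' ((swap a b).injective heq)
  · have hkj' := swap_lt_swap h hlt fun hka => ha (hka.1 ▸ hk)
    rw [swap_apply_self, swap_apply_self] at hkj'
    exact hkj'.asymm hjk

lemma sum_val_map_swap_lt {m : ℕ} {a b : Fin m} (h : a.val + 1 = b.val) {U : Finset (Fin m)}
    (ha : a ∉ U) (hb : b ∈ U) :
    ∑ k ∈ U.map (swap a b).toEmbedding, k.val < ∑ k ∈ U, k.val := by
  rw [Finset.sum_map]
  refine Finset.sum_lt_sum (fun k hk => ?_) ⟨b, hb, ?_⟩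
  · rw [Equiv.coe_toEmbedding, swap_apply_def]
    split_ifs with hka hkb
    · exact absurd (hka ▸ hk) ha
    · omega
    · rfl
  · rw [Equiv.coe_toEmbedding, swap_apply_right]
    omega

namespace AnnihilatorSystem

variable {m : ℕ} {Λ : ℤ → ℕ} (S : AnnihilatorSystem m Λ)

/-- Reflection of the quiver: runner `c` becomes runner `-c`. -/
def mirror : AnnihilatorSystem m fun c => Λ (-c) where
  ideal q := S.ideal fun j => -q j
  far h hq hf := S.far h (by omega) hf
  adjacent h hq hf := S.adjacent h (by omega) hf
  same h hq hf hg := S.same h (by rw [hq]) hf hg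
  braid hab hbc hac hq hf hf' := S.braid hab hbc (by rw [hac]) (by omega) hf hf'
  cyclotomic ha := S.cyclotomic ha

lemma mem_iff_of_far {q : Fin m → ℤ} {a b : Fin m} (h : a.val + 1 = b.val)
    (hq : 2 ≤ (q a - q b).natAbs) (f : MvPolynomial (Fin m) ℤ) :
    f ∈ S.ideal q ↔ rename (swap a b) f ∈ S.ideal (q ∘ swap a b) := by
  refine ⟨fun hf => S.far h ?_ ?_, S.far h hq⟩
  · simp only [Function.comp_apply, swap_apply_left, swap_apply_right]
    omega
  · simpa [rename_rename, Function.comp_assoc, ← Equiv.coe_trans] using hf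

theorem exists_gather {l : ℕ} {q : Fin m → ℤ} {U : Finset (Fin m)} (hU : HeapClosed q l U) :
    ∃ τ : Perm (Fin m), (∀ j : Fin m, j.val < l → τ j = j) ∧
      (∀ j, j ∈ U ↔ l ≤ (τ j).val ∧ (τ j).val < l + U.card) ∧
      ∀ f, f ∈ S.ideal q ↔ rename τ f ∈ S.ideal (q ∘ τ.symm) := by
  induction hs : ∑ k ∈ U, k.val using Nat.strong_induction_on generalizing q U with | _ s ih
  subst hs
  by_cases hgap : ∃ a b : Fin m, a.val + 1 = b.val ∧ l ≤ a ∧ a ∉ U ∧ b ∈ U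
  · obtain ⟨a, b, h, hla, ha, hb⟩ := hgap
    have hfar : 2 ≤ (q a - q b).natAbs := by
      by_contra hnear
      exact ha ((hU b hb).2 a hla (by omega) (by omega))
    obtain ⟨τ, hfix, hmem, hideal⟩ :=
      ih _ (sum_val_map_swap_lt h ha hb) (hU.map_swap h hla ha) rfl
    refine ⟨(swap a b).trans τ, fun j hj => ?_, fun j => ?_, fun f => ?_⟩
    · rw [trans_apply, swap_apply_of_ne_of_ne (by omega) (by omega), hfix j hj]
    · rw [trans_apply, ← U.card_map (swap a b).toEmbedding, ← hmem]
      simp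
    · rw [S.mem_iff_of_far h hfar, hideal, rename_rename, Function.comp_assoc]
      rfl
  · push Not at hgap
    refine ⟨Equiv.refl _, fun j _ => rfl, ?_, fun f => by simp⟩
    refine mem_iff_lt_add_card (fun k hk => (hU k hk).1) fun a b h hla hb => ?_
    by_contra ha
    exact hgap a b h hla ha hb

end AnnihilatorSystem

/-! ### Divisibility modulo an ideal -/

section DvdMod

open Polynomial

variable {R : Type*} [CommRing R] {I : Ideal R} {A B P Q : R[X]}

/-- Divisibility of polynomials modulo an ideal of the ring of coefficients. -/
def DvdMod (I : Ideal R) (A B : R[X]) : Prop :=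
  A.map (Ideal.Quotient.mk I) ∣ B.map (Ideal.Quotient.mk I)

lemma dvdMod_iff_forall_coeff_mem (hA : A.Monic) :
    DvdMod I A B ↔ ∀ i, (B %ₘ A).coeff i ∈ I := by
  rw [DvdMod, ← modByMonic_eq_zero_iff_dvd (hA.map _), ← map_modByMonic _ hA, Polynomial.ext_iff]
  simp only [Polynomial.coeff_map, Polynomial.coeff_zero, Ideal.Quotient.eq_zero_iff_mem]

lemma dvdMod_X_sub_C_iff {y : R} :
    DvdMod I (Polynomial.X - Polynomial.C y) B ↔ B.eval y ∈ I := by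
  rw [DvdMod, Polynomial.map_sub, Polynomial.map_X, Polynomial.map_C, dvd_iff_isRoot, IsRoot,
    eval_map_apply, Ideal.Quotient.eq_zero_iff_mem]

lemma DvdMod.map_eq (hA : A.Monic) (h : DvdMod I A B) :
    B.map (Ideal.Quotient.mk I) =
      A.map (Ideal.Quotient.mk I) * (B /ₘ A).map (Ideal.Quotient.mk I) := by
  have hmod := (modByMonic_eq_zero_iff_dvd (hA.map _)).2 h
  have hdiv := modByMonic_add_div (B.map (Ideal.Quotient.mk I)) (A.map (Ideal.Quotient.mk I))
  rw [hmod, zero_add] at hdiv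
  rw [map_divByMonic _ hA, hdiv]

lemma dvdMod_mul_mul_iff (hA : A.Monic) (h : DvdMod I A B) :
    DvdMod I (A * P) (B * Q) ↔ DvdMod I P (B /ₘ A * Q) := by
  simp only [DvdMod, Polynomial.map_mul]
  rw [h.map_eq hA, mul_assoc, (hA.map _).isRegular.left.dvd_cancel_left]

lemma dvdMod_mul_left_cancel_iff (hA : A.Monic) : DvdMod I (A * P) (A * Q) ↔ DvdMod I P Q := by
  rw [DvdMod, Polynomial.map_mul, Polynomial.map_mul, (hA.map _).isRegular.left.dvd_cancel_left,
    DvdMod]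

lemma DvdMod.mul_left (h : DvdMod I A B) (P : R[X]) : DvdMod I (P * A) (P * B) := by
  rw [DvdMod, Polynomial.map_mul, Polynomial.map_mul]
  exact mul_dvd_mul_left _ h

lemma DvdMod.one_mem (h : DvdMod I A B) (hA : A.Monic) (hB : B.Monic)
    (hdeg : B.natDegree < A.natDegree) : 1 ∈ I := by
  rw [← Ideal.eq_top_iff_one]
  by_contra hI
  have := Ideal.Quotient.nontrivial_iff.2 hI
  refine (hA.map _).not_dvd_of_natDegree_lt (hB.map _).ne_zero ?_ h
  rwa [hA.natDegree_map, hB.natDegree_map]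

lemma dvdMod_mul_iff (hA : A.Monic) :
    DvdMod I (A * P) B ↔ DvdMod I A B ∧ DvdMod I P (B /ₘ A) := by
  have hiff (h : DvdMod I A B) : DvdMod I (A * P) B ↔ DvdMod I P (B /ₘ A) := by
    simpa only [mul_one] using dvdMod_mul_mul_iff (P := P) (Q := 1) hA h
  have hleft (h : DvdMod I (A * P) B) : DvdMod I A B :=
    (Polynomial.map_dvd _ (dvd_mul_right A P)).trans h
  exact ⟨fun h => ⟨hleft h, (hiff (hleft h)).1 h⟩, fun h => (hiff h.1).2 h.2⟩

end DvdMod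

namespace AnnihilatorSystem

open Polynomial

variable {m : ℕ} {Λ : ℤ → ℕ} (S : AnnihilatorSystem m Λ) {q : Fin m → ℤ} {a b : Fin m}
  {A B : (MvPolynomial (Fin m) ℤ)[X]}

lemma rename_eval_X (σ : Fin m → Fin m) (H : (MvPolynomial (Fin m) ℤ)[X]) (j : Fin m) :
    rename σ (H.eval (X j)) = (H.map (rename σ).toRingHom).eval (X (σ j)) := by
  rw [← rename_X (R := ℤ) σ]
  exact (eval_map_apply (rename σ).toRingHom (X j)).symm

lemma dvdMod_mul_of_same (h : a.val + 1 = b.val) (hq : q a = q b) (hA : A.Monic)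
    (hσA : A.map (rename (swap a b)).toRingHom = A)
    (hσB : B.map (rename (swap a b)).toRingHom = B)
    (hdvd : DvdMod (S.ideal q) (A * (Polynomial.X - Polynomial.C (X a))) B) :
    DvdMod (S.ideal q)
      (A * (Polynomial.X - Polynomial.C (X a)) * (Polynomial.X - Polynomial.C (X b))) B := by
  obtain ⟨hAB, hroot⟩ := (dvdMod_mul_iff hA).1 hdvd
  have hσH : (B /ₘ A).map (rename (swap a b)).toRingHom = B /ₘ A := by
    rw [map_divByMonic _ hA, hσA, hσB]
  rw [mul_assoc, dvdMod_mul_iff hA, dvdMod_mul_iff (monic_X_sub_C _), dvdMod_X_sub_C_iff,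
    dvdMod_X_sub_C_iff]
  rw [dvdMod_X_sub_C_iff] at hroot
  refine ⟨hAB, hroot, S.same h hq hroot ?_⟩
  rw [rename_eval_X, hσH, swap_apply_left]
  generalize B /ₘ A = H
  have hdiv := congrArg (Polynomial.eval (X b))
    (modByMonic_add_div H (Polynomial.X - Polynomial.C (X a)))
  rw [modByMonic_X_sub_C_eq_C_eval, Polynomial.eval_add, Polynomial.eval_mul,
    Polynomial.eval_sub, Polynomial.eval_X, Polynomial.eval_C, Polynomial.eval_C] at hdiv
  linear_combination hdiv

end AnnihilatorSystem

/-! ### The polynomial of the beads on a runner -/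

section RunnerPoly

open scoped Polynomial

variable {m : ℕ}

/-- The monic polynomial whose roots are the dots on the beads of runner `c` that sit at a position
in `J`. -/
noncomputable def runnerPoly (c : ℤ) (J : Finset (Fin m)) (q : Fin m → ℤ) :
    (MvPolynomial (Fin m) ℤ)[X] :=
  ∏ j ∈ J with q j = c, (Polynomial.X - Polynomial.C (X j))

variable {c : ℤ} {J : Finset (Fin m)} {q : Fin m → ℤ} {p : Fin m}

lemma monic_runnerPoly (c : ℤ) (J : Finset (Fin m)) (q : Fin m → ℤ) : (runnerPoly c J q).Monic :=
  Polynomial.monic_prod_of_monic _ _ fun j _ => Polynomial.monic_X_sub_C (X j)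

lemma runnerPoly_eq_one (h : ∀ j ∈ J, q j ≠ c) : runnerPoly c J q = 1 := by
  rw [runnerPoly, Finset.filter_eq_empty_iff.2 fun j hj => h j hj, Finset.prod_empty]

lemma natDegree_runnerPoly_of_forall_eq (h : ∀ j ∈ J, q j = c) :
    (runnerPoly c J q).natDegree = J.card := by
  rw [runnerPoly, Finset.filter_eq_self.2 h,
    Polynomial.natDegree_prod_of_monic _ _ fun j _ => Polynomial.monic_X_sub_C (X j)]
  simp

lemma runnerPoly_neg (c : ℤ) (J : Finset (Fin m)) (q : Fin m → ℤ) :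
    (runnerPoly (-c) J fun j => -q j) = runnerPoly c J q := by
  simp only [runnerPoly, neg_inj]

lemma runnerPoly_insert_of_eq (hp : p ∉ J) (hc : q p = c) :
    runnerPoly c (insert p J) q = runnerPoly c J q * (Polynomial.X - Polynomial.C (X p)) := by
  rw [runnerPoly, Finset.filter_insert, if_pos hc,
    Finset.prod_insert fun h => hp (Finset.mem_filter.1 h).1, mul_comm, runnerPoly]

lemma runnerPoly_insert_of_ne (hc : q p ≠ c) :
    runnerPoly c (insert p J) q = runnerPoly c J q := by
  rw [runnerPoly, Finset.filter_insert, if_neg hc, runnerPoly]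

lemma map_rename_runnerPoly (σ : Perm (Fin m)) (c : ℤ) (J : Finset (Fin m)) (q : Fin m → ℤ) :
    (runnerPoly c J q).map (rename σ).toRingHom =
      runnerPoly c (J.map σ.toEmbedding) (q ∘ σ.symm) := by
  simp [runnerPoly, Polynomial.map_prod, Finset.filter_map]

/-- The obstruction to the divisibility of `X ^ N` times the polynomial of runner `c - 1` by the
polynomial of runner `c`. -/
noncomputable def runnerRem (c : ℤ) (N : ℕ) (J : Finset (Fin m)) (q : Fin m → ℤ) :
    (MvPolynomial (Fin m) ℤ)[X] :=
  (Polynomial.X ^ N * runnerPoly (c - 1) J q) %ₘ runnerPoly c J q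

lemma rename_coeff_runnerRem {σ : Perm (Fin m)} (hJ : J.map σ.toEmbedding = J) (c : ℤ) (N : ℕ)
    (q : Fin m → ℤ) (i : ℕ) :
    rename σ ((runnerRem c N J q).coeff i) = (runnerRem c N J (q ∘ σ.symm)).coeff i := by
  have hmap (c : ℤ) : (runnerPoly c J q).map (rename σ).toRingHom =
      runnerPoly c J (q ∘ σ.symm) := by
    rw [map_rename_runnerPoly, hJ]
  have hrem : (runnerRem c N J q).map (rename σ).toRingHom = runnerRem c N J (q ∘ σ.symm) := by
    rw [runnerRem, Polynomial.map_modByMonic _ (monic_runnerPoly _ _ _), Polynomial.map_mul,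
      Polynomial.map_pow, Polynomial.map_X, hmap, hmap, runnerRem]
  rw [← hrem, Polynomial.coeff_map]
  rfl

lemma map_swap_eq_self {a b : Fin m} (h : a ∈ J ↔ b ∈ J) : J.map (swap a b).toEmbedding = J := by
  ext j
  rw [Finset.mem_map_equiv, symm_swap, swap_apply_def]
  split_ifs with hja hjb
  exacts [hja ▸ h.symm, hjb ▸ h, Iff.rfl]

lemma runnerPoly_comp_swap {a b : Fin m} (h : a ∉ J) (h' : b ∉ J) (c : ℤ) :
    runnerPoly c J (q ∘ swap a b) = runnerPoly c J q := by
  refine Finset.prod_congr (Finset.filter_congr fun j hj => ?_) fun _ _ => rfl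
  rw [Function.comp_apply, swap_apply_of_ne_of_ne (ne_of_mem_of_not_mem hj h)
    (ne_of_mem_of_not_mem hj h')]

lemma map_swap_runnerPoly {a b : Fin m} (h : a ∉ J) (h' : b ∉ J) (c : ℤ) :
    (runnerPoly c J q).map (rename (swap a b)).toRingHom = runnerPoly c J q := by
  rw [map_rename_runnerPoly, map_swap_eq_self (iff_of_false h h'), symm_swap,
    runnerPoly_comp_swap h h']

end RunnerPoly

namespace AnnihilatorSystem

variable {m : ℕ} {Λ : ℤ → ℕ} (S : AnnihilatorSystem m Λ)

/-- Modulo the annihilator of `1_q`, the polynomial of the beads on runner `c` at positions in `J`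
divides `X ^ N` times that of the beads on runner `c - 1`. For suitable `N` this holds for every
`q` if `J` is an initial segment; it bounds the nilpotency degree of the dots. -/
def RunnerDvd (c : ℤ) (N : ℕ) (J : Finset (Fin m)) (q : Fin m → ℤ) : Prop :=
  DvdMod (S.ideal q) (runnerPoly c J q) (Polynomial.X ^ N * runnerPoly (c - 1) J q)

variable {S} {c : ℤ} {N : ℕ} {J : Finset (Fin m)} {q : Fin m → ℤ} {a b p : Fin m}

lemma runnerDvd_iff_forall_coeff_mem :
    S.RunnerDvd c N J q ↔ ∀ i, (runnerRem c N J q).coeff i ∈ S.ideal q :=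
  dvdMod_iff_forall_coeff_mem (monic_runnerPoly _ _ _)

lemma RunnerDvd.rename_coeff_mem (h : S.RunnerDvd c N J (q ∘ swap a b)) (ha : a ∈ J) (hb : b ∈ J)
    (i : ℕ) : rename (swap a b) ((runnerRem c N J q).coeff i) ∈ S.ideal (q ∘ swap a b) := by
  rw [rename_coeff_runnerRem (map_swap_eq_self (iff_of_true ha hb)), symm_swap]
  exact runnerDvd_iff_forall_coeff_mem.1 h i

lemma RunnerDvd.of_far (h : a.val + 1 = b.val) (hq : 2 ≤ (q a - q b).natAbs) (ha : a ∈ J)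
    (hb : b ∈ J) (hdvd : S.RunnerDvd c N J (q ∘ swap a b)) : S.RunnerDvd c N J q :=
  runnerDvd_iff_forall_coeff_mem.2 fun i => S.far h hq (hdvd.rename_coeff_mem ha hb i)

lemma RunnerDvd.of_braid (hab : a.val + 1 = b.val) (hbp : b.val + 1 = p.val) (hap : q a = q p)
    (hq : (q a - q b).natAbs = 1) (ha : a ∈ J) (hb : b ∈ J) (hp : p ∈ J)
    (hdvd : S.RunnerDvd c N J (q ∘ swap a b)) (hdvd' : S.RunnerDvd c N J (q ∘ swap b p)) :
    S.RunnerDvd c N J q :=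
  runnerDvd_iff_forall_coeff_mem.2 fun i =>
    S.braid hab hbp hap hq (hdvd.rename_coeff_mem ha hb i) (hdvd'.rename_coeff_mem hb hp i)

lemma RunnerDvd.of_stack (hab : a.val + 1 = b.val) (hbp : b.val + 1 = p.val) (haq : q a = q b)
    (hq : (q b - q p).natAbs = 1) (ha : a ∈ J) (hb : b ∈ J) (hp : p ∈ J)
    (hdvd : S.RunnerDvd c N J (q ∘ swap b p)) : S.RunnerDvd c N J q := by
  refine runnerDvd_iff_forall_coeff_mem.2 fun i => ?_
  have hadj := S.adjacent hbp hq (hdvd.rename_coeff_mem hb hp i)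
  have hσ := rename_coeff_runnerRem (map_swap_eq_self (iff_of_true ha hb)) c N q i
  rw [symm_swap, comp_swap_eq_self haq] at hσ
  have hneg : -(runnerRem c N J q).coeff i ∈ S.ideal q := S.same hab haq hadj (by
    rw [map_mul, map_sub, rename_X, rename_X, hσ, swap_apply_right,
      swap_apply_of_ne_of_ne (by omega) (by omega)]
    ring)
  simpa using hneg

lemma RunnerDvd.insert_of_ne (h : S.RunnerDvd c N J q) (hp : p ∉ J) (hc : q p ≠ c) :
    S.RunnerDvd c N (insert p J) q := by
  rw [RunnerDvd, runnerPoly_insert_of_ne hc]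
  by_cases hc' : q p = c - 1
  · rw [runnerPoly_insert_of_eq hp hc', ← mul_assoc]
    refine h.trans (Polynomial.map_dvd _ (dvd_mul_right _ _))
  · rwa [runnerPoly_insert_of_ne hc']

lemma RunnerDvd.insert_insert_of_eq (h : S.RunnerDvd c N (insert a J) q)
    (hab : a.val + 1 = b.val) (ha : a ∉ J) (hb : b ∉ J) (hqa : q a = c) (hqb : q b = c) :
    S.RunnerDvd c N (insert b (insert a J)) q := by
  have hb' : b ∉ insert a J := by simp [hb, Fin.ext_iff, ← hab]
  rw [RunnerDvd, runnerPoly_insert_of_eq ha hqa, runnerPoly_insert_of_ne (by omega)] at h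
  rw [RunnerDvd, runnerPoly_insert_of_eq hb' hqb, runnerPoly_insert_of_eq ha hqa,
    runnerPoly_insert_of_ne (by omega), runnerPoly_insert_of_ne (by omega)]
  refine S.dvdMod_mul_of_same hab (hqa.trans hqb.symm) (monic_runnerPoly _ _ _)
    (map_swap_runnerPoly ha hb c) ?_ h
  rw [Polynomial.map_mul, Polynomial.map_pow, Polynomial.map_X, map_swap_runnerPoly ha hb]

lemma RunnerDvd.insert_insert_of_pred (h : S.RunnerDvd c N J q)
    (h' : S.RunnerDvd c N (insert a J) (q ∘ swap a b)) (hab : a.val + 1 = b.val) (ha : a ∉ J)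
    (hb : b ∉ J) (hqa : q a = c - 1) (hqb : q b = c) :
    S.RunnerDvd c N (insert b (insert a J)) q := by
  have hb' : b ∉ insert a J := by simp [hb, Fin.ext_iff, ← hab]
  have hσa : (q ∘ swap a b) a = c := by simp [hqb]
  rw [RunnerDvd, runnerPoly_insert_of_eq ha hσa, runnerPoly_insert_of_ne (by omega),
    runnerPoly_comp_swap ha hb, runnerPoly_comp_swap ha hb, dvdMod_mul_iff (monic_runnerPoly _ _ _),
    dvdMod_X_sub_C_iff] at h'
  rw [RunnerDvd, runnerPoly_insert_of_eq hb' hqb, runnerPoly_insert_of_ne (by omega),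
    runnerPoly_insert_of_ne (by omega), runnerPoly_insert_of_eq ha hqa, ← mul_assoc,
    dvdMod_mul_mul_iff (monic_runnerPoly _ _ _) h, dvdMod_X_sub_C_iff, Polynomial.eval_mul,
    Polynomial.eval_sub, Polynomial.eval_X, Polynomial.eval_C]
  have hσ : ((Polynomial.X ^ N * runnerPoly (c - 1) J q) /ₘ runnerPoly c J q).map
      (rename (swap a b)).toRingHom = (Polynomial.X ^ N * runnerPoly (c - 1) J q) /ₘ
        runnerPoly c J q := by
    rw [Polynomial.map_divByMonic _ (monic_runnerPoly _ _ _), Polynomial.map_mul,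
      Polynomial.map_pow, Polynomial.map_X, map_swap_runnerPoly ha hb, map_swap_runnerPoly ha hb]
  have hadj := S.adjacent (q := q) (f := Polynomial.eval (X b) _) hab (by omega)
    (by rw [rename_eval_X, hσ, swap_apply_right]; exact h'.2)
  rw [mul_comm, ← neg_sub, neg_mul]
  exact neg_mem hadj

lemma X_pow_mem_of_far_below (h : ∀ j < p, 2 ≤ (q j - q p).natAbs) : X p ^ Λ (q p) ∈ S.ideal q := by
  have hU : HeapClosed q 0 {p} := by
    simp only [HeapClosed, Finset.mem_singleton, forall_eq, zero_le, true_and]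
    exact fun j _ hj hq => absurd hq (by have := h j hj; omega)
  obtain ⟨τ, -, hmem, hideal⟩ := S.exists_gather hU
  have hτ : (τ p).val = 0 := by
    have := (hmem p).1 (Finset.mem_singleton_self p)
    rw [Finset.card_singleton] at this
    omega
  rw [hideal, map_pow, rename_X]
  simpa using S.cyclotomic (q := q ∘ τ.symm) hτ

lemma X_pow_sum_mem_of_desc (h : ∀ j ≤ p, q j + j.val = q p + p.val) :
    X p ^ (∑ j ∈ Finset.Iic p, Λ (q j)) ∈ S.ideal q := by
  induction hn : p.val generalizing p with
  | zero =>
    have hIic : Finset.Iic p = {p} := by ext j; simp [Fin.ext_iff, Fin.le_def, hn]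
    rw [hIic, Finset.sum_singleton]
    exact S.cyclotomic hn
  | succ n ih =>
    obtain ⟨a, ha⟩ : ∃ a : Fin m, a.val = n := ⟨⟨n, by omega⟩, rfl⟩
    have hIic : Finset.Iic p = insert p (Finset.Iic a) := by
      ext j
      simp only [Finset.mem_Iic, Finset.mem_insert, Fin.ext_iff, Fin.le_def]
      omega
    have hqa := h a (by omega)
    have hprev : X a ^ (∑ j ∈ Finset.Iic a, Λ (q j)) ∈ S.ideal q :=
      ih (fun j hj => by have := h j (by omega); omega) ha
    have hfree : X a ^ Λ (q p) ∈ S.ideal (q ∘ swap a p) := by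
      have := X_pow_mem_of_far_below (S := S) (q := q ∘ swap a p) (p := a) fun j hj => by
        have := h j (by omega)
        rw [Function.comp_apply, Function.comp_apply, swap_apply_left,
          swap_apply_of_ne_of_ne (by omega) (by omega)]
        omega
      simpa using this
    have hadj : (X a - X p) * X p ^ Λ (q p) ∈ S.ideal q :=
      S.adjacent (by omega) (by omega) (by rwa [map_pow, rename_X, swap_apply_right])
    rw [hIic, Finset.sum_insert (by simp only [Finset.mem_Iic]; omega), pow_add]
    generalize ∑ j ∈ Finset.Iic a, Λ (q j) = N at hprev ⊢
    obtain ⟨g, hg⟩ := sub_dvd_pow_sub_pow (X a : MvPolynomial (Fin m) ℤ) (X p) N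
    have hsplit : X p ^ Λ (q p) * X p ^ N =
        X p ^ Λ (q p) * X a ^ N - g * ((X a - X p) * X p ^ Λ (q p)) := by
      linear_combination -X p ^ Λ (q p) * hg
    rw [hsplit]
    exact sub_mem (Ideal.mul_mem_left _ _ hprev) (Ideal.mul_mem_left _ _ hadj)

end AnnihilatorSystem

/-! ### Straightening words of runners -/

/-- The descending word `c + k - 1, …, c + 1, c` of length `k`. -/
def descWord (c : ℤ) : ℕ → List ℤ
  | 0 => []
  | k + 1 => (c + k) :: descWord c k

@[simp]
lemma length_descWord (c : ℤ) (k : ℕ) : (descWord c k).length = k := by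
  induction k with
  | zero => rfl
  | succ k ih => rw [descWord, List.length_cons, ih]

lemma mem_descWord {c b : ℤ} {k : ℕ} : b ∈ descWord c k ↔ c ≤ b ∧ b < c + k := by
  induction k with
  | zero => simp [descWord]
  | succ k ih =>
    rw [descWord, List.mem_cons, ih]
    omega

lemma getElem_descWord {c : ℤ} {k j : ℕ} (h : j < (descWord c k).length) :
    (descWord c k)[j] + (j + 1) = c + k := by
  induction k generalizing j with
  | zero => simp [descWord] at h
  | succ k ih =>
    cases j with
    | zero => simp [descWord, add_assoc]
    | succ j =>
      have := ih (j := j) (by simpa using h)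
      simp only [descWord, List.getElem_cons_succ]
      omega

lemma descWord_add (c : ℤ) (j i : ℕ) :
    descWord c (j + i) = descWord (c + j) i ++ descWord c j := by
  induction i with
  | zero => rfl
  | succ i ih => rw [← add_assoc, descWord, ih, descWord, List.cons_append, Nat.cast_add, add_assoc]

/-- The words of runners that arise from the descending words over `c` by the moves under which
divisibility of the polynomial of runner `c` (see `AnnihilatorSystem.RunnerDvd`) persists. -/
inductive Straightenable (c : ℤ) : List ℤ → Prop
  | desc (k : ℕ) : Straightenable c (descWord c k)
  | append_ne {u : List ℤ} {a : ℤ} : a ≠ c → Straightenable c u → Straightenable c (u ++ [a])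
  | append_self {u : List ℤ} : Straightenable c (u ++ [c]) → Straightenable c (u ++ [c, c])
  | append_pred {u : List ℤ} : Straightenable c u → Straightenable c (u ++ [c]) →
      Straightenable c (u ++ [c - 1, c])
  | far {u v : List ℤ} {a b : ℤ} : 2 ≤ (a - b).natAbs → Straightenable c (u ++ b :: a :: v) →
      Straightenable c (u ++ a :: b :: v)
  | braid {u v : List ℤ} {a b : ℤ} : (a - b).natAbs = 1 → Straightenable c (u ++ b :: a :: a :: v) →
      Straightenable c (u ++ a :: a :: b :: v) → Straightenable c (u ++ a :: b :: a :: v)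
  | stack {u v : List ℤ} {a b : ℤ} : (a - b).natAbs = 1 → Straightenable c (u ++ a :: b :: a :: v) →
      Straightenable c (u ++ a :: a :: b :: v)

namespace Straightenable

variable {c a : ℤ} {u s v : List ℤ} {n k : ℕ}

lemma cons_append_of_far (hs : ∀ b ∈ s, 2 ≤ (a - b).natAbs)
    (h : Straightenable c (u ++ s ++ a :: v)) : Straightenable c (u ++ a :: (s ++ v)) := by
  induction s generalizing u with
  | nil => simpa using h
  | cons b s ih =>
    rw [List.forall_mem_cons] at hs
    refine far hs.1 ?_
    simpa using ih (u := u ++ [b]) hs.2 (by simpa using h)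

lemma cons_of_far (ha : a ≠ c) (hs : ∀ b ∈ s, 2 ≤ (a - b).natAbs)
    (h : Straightenable c (u ++ s)) : Straightenable c (u ++ a :: s) := by
  simpa using cons_append_of_far (v := []) hs (h.append_ne ha)

lemma cons_head_descWord (hshort : ∀ w : List ℤ, w.length < n → Straightenable c w)
    (hn : u.length + (k + 2) = n) : Straightenable c (u ++ (c + k) :: descWord c (k + 1)) := by
  cases k with
  | zero => simpa [descWord] using append_self (hshort (u ++ [c]) (by grind [length_descWord]))
  | succ k =>
    refine stack (by omega) ?_
    have hpast := cons_of_far (u := u ++ [c + (k + 1 : ℕ), c + k]) (s := descWord c k)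
      (a := c + (k + 1 : ℕ)) (c := c) (by omega)
      (fun b hb => by rw [mem_descWord] at hb; omega) (hshort _ (by grind [length_descWord]))
    simpa using hpast

lemma cons_mem_descWord {j i : ℕ} (hshort : ∀ w : List ℤ, w.length < n → Straightenable c w)
    (hn : u.length + (j + 2 + i + 1) = n) :
    Straightenable c (u ++ (c + j) :: descWord c (j + 2 + i)) := by
  rw [descWord_add, descWord, descWord]
  refine cons_append_of_far (fun b hb => by rw [mem_descWord] at hb; omega) (braid (by omega) ?_ ?_)
  · have htop := cons_head_descWord (k := j)
      (u := u ++ descWord (c + (j + 2 : ℕ)) i ++ [c + (j + 1 : ℕ)]) hshort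
      (by grind [length_descWord])
    simpa [descWord] using htop
  · have hpast := cons_of_far (u := u ++ descWord (c + (j + 2 : ℕ)) i ++ [c + j, c + j])
      (s := descWord c j) (a := c + (j + 1 : ℕ)) (c := c) (by omega)
      (fun b hb => by rw [mem_descWord] at hb; omega) (hshort _ (by grind [length_descWord]))
    simpa using hpast

lemma cons_descWord (hshort : ∀ w : List ℤ, w.length < n → Straightenable c w)
    (hn : u.length + (k + 1) = n) (ha : a ≠ c + k) : Straightenable c (u ++ a :: descWord c k) := by
  by_cases hpred : a = c - 1 ∧ 1 ≤ k
  · obtain ⟨rfl, hk⟩ := hpred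
    obtain ⟨i, rfl⟩ := Nat.exists_eq_add_of_le hk
    rw [descWord_add]
    refine cons_append_of_far (fun b hb => by rw [mem_descWord] at hb; omega) ?_
    simpa [descWord] using append_pred (u := u ++ descWord (c + (1 : ℕ)) i)
      (hshort _ (by grind [length_descWord])) (hshort _ (by grind [length_descWord]))
  by_cases hmem : c ≤ a ∧ a < c + k
  · obtain ⟨j, rfl⟩ := Int.le.dest hmem.1
    by_cases htop : k = j + 1
    · subst htop
      exact cons_head_descWord hshort (by omega)
    · obtain ⟨i, rfl⟩ : ∃ i, k = j + 2 + i := ⟨k - (j + 2), by omega⟩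
      exact cons_mem_descWord hshort hn
  · exact cons_of_far (by omega) (fun b hb => by rw [mem_descWord] at hb; omega)
      (hshort _ (by grind [length_descWord]))

lemma append_descWord (hshort : ∀ w : List ℤ, w.length < n → Straightenable c w)
    (hn : u.length + k = n) : Straightenable c (u ++ descWord c k) := by
  induction u using List.reverseRecOn generalizing k with
  | nil => exact desc k
  | append_singleton u a ih =>
    rw [List.length_append, List.length_singleton] at hn
    rw [List.append_assoc, List.singleton_append]
    by_cases ha : a = c + k
    · rw [ha]
      exact ih (k := k + 1) (by omega)
    · exact cons_descWord hshort (by omega) ha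

end Straightenable

theorem straightenable (c : ℤ) (w : List ℤ) : Straightenable c w := by
  induction hn : w.length using Nat.strong_induction_on generalizing w with | _ n ih
  have h := Straightenable.append_descWord (k := 0) (fun w hw => ih _ hw w rfl) hn
  rwa [descWord, List.append_nil] at h

/-! ### Divisibility along initial segments -/

section PrefixOfSequence

variable {m : ℕ} {α : Type*} {q : Fin m → α} {u v w : List α} {a b : α}

lemma prefix_ofFn_iff :
    w <+: List.ofFn q ↔ w.length ≤ m ∧ ∀ j : Fin m, ∀ h : j.val < w.length, w[j.val] = q j := by
  rw [List.prefix_iff_getElem]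
  simp only [List.length_ofFn, List.getElem_ofFn]
  exact ⟨fun ⟨hm, h⟩ => ⟨hm, fun j hj => h j hj⟩, fun ⟨hm, h⟩ => ⟨hm, fun x hx => h ⟨x, _⟩ hx⟩⟩

lemma exists_eq_of_prefix_ofFn (h : u ++ a :: v <+: List.ofFn q) :
    ∃ p : Fin m, p.val = u.length ∧ q p = a := by
  rw [prefix_ofFn_iff] at h
  obtain ⟨hm, h⟩ := h
  rw [List.length_append, List.length_cons] at hm
  refine ⟨⟨u.length, by omega⟩, rfl, ?_⟩
  rw [← h _ (by simp)]
  simp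

lemma exists_swap_prefix_ofFn (h : u ++ a :: b :: v <+: List.ofFn q) :
    ∃ p p' : Fin m, p.val = u.length ∧ p.val + 1 = p'.val ∧ q p = a ∧ q p' = b ∧
      u ++ b :: a :: v <+: List.ofFn (q ∘ swap p p') := by
  obtain ⟨p, hp, hqp⟩ := exists_eq_of_prefix_ofFn h
  obtain ⟨p', hp', hqp'⟩ := exists_eq_of_prefix_ofFn (u := u ++ [a]) (a := b) (v := v)
    (by simpa using h)
  rw [List.length_append, List.length_singleton] at hp'
  refine ⟨p, p', hp, by omega, hqp, hqp', ?_⟩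
  rw [prefix_ofFn_iff] at h ⊢
  refine ⟨by simpa using h.1, fun j hj => ?_⟩
  have hj' := h.2 j (by simpa using hj)
  rw [Function.comp_apply, swap_apply_def]
  split_ifs with hjp hjp'
  · simp [hjp, hp, hqp']
  · simp [hjp', hp', hqp]
  · rw [← hj']
    grind

lemma exists_swap_prefix_ofFn_of_three {d : α} (h : u ++ a :: b :: d :: v <+: List.ofFn q) :
    ∃ p p' p'' : Fin m, p.val = u.length ∧ p.val + 1 = p'.val ∧ p'.val + 1 = p''.val ∧
      q p = a ∧ q p' = b ∧ q p'' = d ∧ u ++ b :: a :: d :: v <+: List.ofFn (q ∘ swap p p') ∧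
        u ++ a :: d :: b :: v <+: List.ofFn (q ∘ swap p' p'') := by
  obtain ⟨p, p₁, hp, hpp₁, hqp, hqp₁, hswap⟩ := exists_swap_prefix_ofFn h
  obtain ⟨p₂, p', hp₂, hp₂p', -, hqp', hswap'⟩ := exists_swap_prefix_ofFn (u := u ++ [a])
    (a := b) (b := d) (v := v) (by simpa using h)
  rw [List.length_append, List.length_singleton] at hp₂
  obtain rfl : p₁ = p₂ := Fin.ext (by omega)
  exact ⟨p, p₁, p', hp, hpp₁, hp₂p', hqp, hqp₁, hqp', hswap, by simpa using hswap'⟩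

end PrefixOfSequence

/-- The positions of the letters of `w`, where `w` is an initial segment of a sequence. -/
def prefixPositions (m : ℕ) {α : Type*} (w : List α) : Finset (Fin m) := {j | j.val < w.length}

section PrefixPositions

variable {m : ℕ} {α : Type*} {u w : List α} {a b : α} {j p p' : Fin m}

@[simp]
lemma mem_prefixPositions : j ∈ prefixPositions m w ↔ j.val < w.length := by
  simp [prefixPositions]

lemma prefixPositions_append_singleton (hp : p.val = u.length) :
    prefixPositions m (u ++ [a]) = insert p (prefixPositions m u) := by
  ext j
  rw [Finset.mem_insert, mem_prefixPositions, mem_prefixPositions, Fin.ext_iff,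
    List.length_append, List.length_singleton]
  omega

lemma prefixPositions_append_pair (hp : p.val = u.length) (hp' : p.val + 1 = p'.val) :
    prefixPositions m (u ++ [a, b]) = insert p' (insert p (prefixPositions m u)) := by
  rw [List.append_cons, prefixPositions_append_singleton (p := p') (by grind),
    prefixPositions_append_singleton hp]

end PrefixPositions

namespace AnnihilatorSystem

variable {m : ℕ} {Λ : ℤ → ℕ} (S : AnnihilatorSystem m Λ) {c : ℤ} {T : Finset ℤ} {q : Fin m → ℤ}
  {w : List ℤ}

lemma X_pow_mem_of_desc {p : Fin m} (h : ∀ j ≤ p, q j + j.val = q p + p.val)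
    (hT : ∀ j ≤ p, q j ∈ T) : X p ^ (∑ t ∈ T, Λ t) ∈ S.ideal q := by
  have hinj : Set.InjOn q (Finset.Iic p) := fun i hi j hj hij => by
    have hi' := h i (Finset.mem_Iic.1 hi)
    have hj' := h j (Finset.mem_Iic.1 hj)
    omega
  refine Ideal.pow_mem_of_pow_mem _ (X_pow_sum_mem_of_desc h) ?_
  rw [← Finset.sum_image hinj]
  exact Finset.sum_le_sum_of_subset (Finset.image_subset_iff.2 fun j hj =>
    hT j (Finset.mem_Iic.1 hj))

lemma runnerDvd_descWord {k : ℕ} (hq : descWord c k <+: List.ofFn q)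
    (hT : ∀ t ∈ descWord c k, t ∈ T) :
    S.RunnerDvd c (∑ t ∈ T, Λ t) (prefixPositions m (descWord c k)) q := by
  cases k with
  | zero =>
    rw [RunnerDvd, runnerPoly_eq_one (by simp [descWord]), DvdMod, Polynomial.map_one]
    exact one_dvd _
  | succ k =>
    obtain ⟨hm, hq⟩ := prefix_ofFn_iff.1 hq
    simp only [length_descWord] at hm hq
    obtain ⟨p, hp⟩ : ∃ p : Fin m, p.val = k := ⟨⟨k, by omega⟩, rfl⟩
    have hqj (j : Fin m) (hj : j ≤ p) : q j + j.val = c + k := by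
      rw [← hq j (by omega)]
      have := getElem_descWord (c := c) (k := k + 1) (j := j.val) (by grind)
      omega
    have hpoly : runnerPoly c (prefixPositions m (descWord c (k + 1))) q =
        Polynomial.X - Polynomial.C (X p) := by
      have hfilter : {j ∈ prefixPositions m (descWord c (k + 1)) | q j = c} = {p} := by
        ext j
        simp only [Finset.mem_filter, mem_prefixPositions, length_descWord, Finset.mem_singleton]
        have := hqj j
        omega
      rw [runnerPoly, hfilter, Finset.prod_singleton]
    rw [RunnerDvd, hpoly, dvdMod_X_sub_C_iff, Polynomial.eval_mul, Polynomial.eval_pow,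
      Polynomial.eval_X]
    refine Ideal.mul_mem_right _ _ (S.X_pow_mem_of_desc (fun j hj => ?_) fun j hj => hT _ ?_)
    · rw [hqj j hj, hqj p le_rfl]
    · rw [mem_descWord]
      have := hqj j hj
      omega

theorem runnerDvd_prefixPositions (hq : w <+: List.ofFn q) (hT : ∀ t ∈ w, c ≤ t → t ∈ T) :
    S.RunnerDvd c (∑ t ∈ T, Λ t) (prefixPositions m w) q := by
  induction straightenable c w generalizing q with
  | desc k => exact S.runnerDvd_descWord hq fun t ht => hT t ht (mem_descWord.1 ht).1
  | append_ne ha _ ih =>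
    obtain ⟨p, hp, rfl⟩ := exists_eq_of_prefix_ofFn hq
    rw [prefixPositions_append_singleton hp]
    exact (ih ((List.prefix_append _ _).trans hq) (by grind)).insert_of_ne (by simp [hp]) ha
  | append_self _ ih =>
    obtain ⟨p, p', hp, hpp', hqp, hqp', -⟩ := exists_swap_prefix_ofFn hq
    have hdvd := ih (List.IsPrefix.trans ⟨[c], by simp⟩ hq) (by grind)
    rw [prefixPositions_append_singleton hp] at hdvd
    rw [prefixPositions_append_pair hp hpp']
    exact hdvd.insert_insert_of_eq hpp' (by simp [hp]) (by grind [mem_prefixPositions]) hqp hqp'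
  | append_pred _ _ ih ih' =>
    obtain ⟨p, p', hp, hpp', hqp, hqp', hswap⟩ := exists_swap_prefix_ofFn hq
    have hdvd := ih ((List.prefix_append _ _).trans hq) (by grind)
    have hdvd' := ih' (List.IsPrefix.trans ⟨[c - 1], by simp⟩ hswap) (by grind)
    rw [prefixPositions_append_singleton hp] at hdvd'
    rw [prefixPositions_append_pair hp hpp']
    exact hdvd.insert_insert_of_pred hdvd' hpp' (by simp [hp]) (by grind [mem_prefixPositions]) hqp
      hqp'
  | far hab _ ih =>
    obtain ⟨p, p', hp, hpp', rfl, rfl, hswap⟩ := exists_swap_prefix_ofFn hq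
    have hdvd := ih hswap (by grind)
    simp only [prefixPositions, List.length_append, List.length_cons] at hdvd ⊢
    exact hdvd.of_far hpp' hab (by grind) (by grind)
  | braid hab _ _ ih ih' =>
    obtain ⟨p, p', p'', hp, hpp', hp'p'', rfl, rfl, hqp'', hswap, hswap'⟩ :=
      exists_swap_prefix_ofFn_of_three hq
    have hdvd := ih hswap (by grind)
    have hdvd' := ih' hswap' (by grind)
    simp only [prefixPositions, List.length_append, List.length_cons] at hdvd hdvd' ⊢
    exact hdvd.of_braid hpp' hp'p'' hqp''.symm hab (by grind) (by grind) (by grind) hdvd'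
  | stack hab _ ih =>
    obtain ⟨p, p', p'', hp, hpp', hp'p'', rfl, hqp', rfl, -, hswap⟩ :=
      exists_swap_prefix_ofFn_of_three hq
    have hdvd := ih hswap (by grind)
    simp only [prefixPositions, List.length_append, List.length_cons] at hdvd ⊢
    exact hdvd.of_stack hpp' hp'p'' hqp'.symm (by rwa [hqp']) (by grind) (by grind) (by grind)

end AnnihilatorSystem

/-! ### Nilpotency of the dots and stacked beads -/

namespace AnnihilatorSystem

variable {m : ℕ} {Λ : ℤ → ℕ} (S : AnnihilatorSystem m Λ) {c : ℤ} {N : ℕ} {T : Finset ℤ}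
  {q : Fin m → ℤ} {r p : Fin m} {J U : Finset (Fin m)}

lemma runnerDvd_of_forall_mem_iff_lt {k : ℕ} (hJ : ∀ j, j ∈ J ↔ j.val < k)
    (hT : ∀ j ∈ J, c ≤ q j → q j ∈ T) : S.RunnerDvd c (∑ t ∈ T, Λ t) J q := by
  obtain rfl : J = prefixPositions m ((List.ofFn q).take k) := by
    ext j
    simp [hJ]
  refine S.runnerDvd_prefixPositions ⟨_, List.take_append_drop _ _⟩ fun t ht hct => ?_
  obtain ⟨j, hj, rfl⟩ := List.mem_take_iff_getElem.1 ht
  rw [List.length_ofFn] at hj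
  rw [List.getElem_ofFn] at hct ⊢
  exact hT ⟨j, by omega⟩ (by grind) hct

lemma runnerDvd_mirror_iff :
    S.mirror.RunnerDvd (1 - c) N J (fun j => -q j) ↔
      DvdMod (S.ideal q) (runnerPoly (c - 1) J q) (Polynomial.X ^ N * runnerPoly c J q) := by
  rw [RunnerDvd, show 1 - c - 1 = -c by ring, ← neg_sub c 1, runnerPoly_neg, runnerPoly_neg]
  simp [mirror]

lemma dvdMod_X_pow_mul_of_forall_mem_iff_lt {k : ℕ} (hJ : ∀ j, j ∈ J ↔ j.val < k)
    (hT : ∀ j ∈ J, q j < c → q j ∈ T) :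
    DvdMod (S.ideal q) (runnerPoly (c - 1) J q)
      (Polynomial.X ^ (∑ t ∈ T, Λ t) * runnerPoly c J q) := by
  have hmirror := S.mirror.runnerDvd_of_forall_mem_iff_lt (c := 1 - c)
    (T := T.map (Equiv.neg ℤ).toEmbedding) (q := fun j => -q j) hJ fun j hj hq => by
      simpa using hT j hj (by omega)
  simpa [runnerDvd_mirror_iff] using hmirror

theorem X_pow_sum_mem (hT : ∀ j ≤ r, q j ∈ T) : X r ^ (∑ t ∈ T, Λ t) ∈ S.ideal q := by
  have hup := S.runnerDvd_of_forall_mem_iff_lt (c := q r) (T := {t ∈ T | q r ≤ t}) (q := q)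
    (J := insert r (Finset.Iio r)) (k := r + 1) (fun j => by simp)
    fun j hj hq => Finset.mem_filter.2 ⟨hT j (by simpa [le_iff_eq_or_lt] using hj), hq⟩
  have hdown := S.dvdMod_X_pow_mul_of_forall_mem_iff_lt (c := q r) (T := {t ∈ T | ¬q r ≤ t})
    (q := q) (J := Finset.Iio r) (k := r) (fun j => by simp)
    fun j hj hq => Finset.mem_filter.2 ⟨hT j (Finset.mem_Iio.1 hj).le, not_le.2 hq⟩
  rw [RunnerDvd, runnerPoly_insert_of_eq (by simp) rfl, runnerPoly_insert_of_ne (by omega)] at hup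
  have hdvd := hup.trans (hdown.mul_left _)
  rw [← mul_assoc, ← pow_add, Finset.sum_filter_add_sum_filter_not, mul_comm (Polynomial.X ^ _),
    ← DvdMod, dvdMod_mul_left_cancel_iff (monic_runnerPoly _ _ _), dvdMod_X_sub_C_iff] at hdvd
  simpa using hdvd

theorem X_pow_sum_mem_of_heapClosed (hU : HeapClosed q 0 U) (hr : r ∈ U) (hT : ∀ j ∈ U, q j ∈ T) :
    X r ^ (∑ t ∈ T, Λ t) ∈ S.ideal q := by
  obtain ⟨τ, -, hmem, hideal⟩ := S.exists_gather hU
  rw [hideal, map_pow, rename_X]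
  refine S.X_pow_sum_mem fun j hj => hT _ ((hmem _).2 ?_)
  have hτr := (hmem r).1 hr
  rw [apply_symm_apply]
  omega

lemma runnerDvd_Icc (hrp : r ≤ p) (hq : ∀ j ∈ Finset.Icc r p, q j = q r)
    (hX : X r ^ N ∈ S.ideal q) : S.RunnerDvd (q r) N (Finset.Icc r p) q := by
  induction hd : p.val - r.val generalizing p with
  | zero =>
    obtain rfl : r = p := Fin.ext (by omega)
    rw [Finset.Icc_self, RunnerDvd, ← insert_empty_eq, runnerPoly_insert_of_eq (by simp) rfl,
      runnerPoly_eq_one (by simp), one_mul, dvdMod_X_sub_C_iff, Polynomial.eval_mul,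
      Polynomial.eval_pow, Polynomial.eval_X]
    exact Ideal.mul_mem_right _ _ hX
  | succ d ih =>
    obtain ⟨a, ha⟩ : ∃ a : Fin m, a.val + 1 = p.val := ⟨⟨p - 1, by omega⟩, by grind⟩
    have hIcc : Finset.Icc r p = insert p (Finset.Icc r a) := by
      ext j
      simp only [Finset.mem_Icc, Finset.mem_insert]
      omega
    have hIco : Finset.Icc r a = insert a (Finset.Ico r a) :=
      (Finset.Ico_insert_right (by omega)).symm
    have hdvd := ih (p := a) (by omega)
      (fun j hj => hq j (hIcc ▸ Finset.mem_insert_of_mem hj)) (by omega)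
    rw [hIco] at hdvd
    rw [hIcc, hIco]
    exact hdvd.insert_insert_of_eq ha (by simp) (by grind) (hq a (by grind))
      (hq p (by grind))

lemma one_mem_of_Icc (hrp : r ≤ p) (hq : ∀ j ∈ Finset.Icc r p, q j = q r)
    (hX : X r ^ N ∈ S.ideal q) (hN : N < (Finset.Icc r p).card) : 1 ∈ S.ideal q := by
  have hdvd := S.runnerDvd_Icc hrp hq hX
  rw [RunnerDvd, runnerPoly_eq_one (c := q r - 1) fun j hj => by rw [hq j hj]; omega, mul_one]
    at hdvd
  refine hdvd.one_mem (monic_runnerPoly _ _ _) (Polynomial.monic_X_pow N) ?_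
  rwa [Polynomial.natDegree_X_pow, natDegree_runnerPoly_of_forall_eq hq]

theorem one_mem_of_stack (hr : r ∈ U) (hU : HeapClosed q (r + 1) (U.erase r))
    (hq : ∀ k ∈ U, q k = q r) (hX : X r ^ N ∈ S.ideal q) (hN : N < U.card) : 1 ∈ S.ideal q := by
  obtain ⟨τ, hfix, hmem, hideal⟩ := S.exists_gather hU
  have hτr : τ r = r := hfix r (by omega)
  have hτr' : τ.symm r = r := by rw [symm_apply_eq, hτr]
  have hrange (i : Fin m) :
      i ∈ U.map τ.toEmbedding ↔ r ≤ i ∧ i.val < r + 1 + (U.erase r).card := by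
    have herase := hmem (τ.symm i)
    rw [Finset.mem_erase, Ne, symm_apply_eq, hτr, apply_symm_apply] at herase
    rw [Finset.mem_map_equiv]
    by_cases hir : i = r
    · simp only [hir, hτr', hr, true_iff]
      omega
    · rw [← and_iff_right (a := ¬i = r) hir (b := τ.symm i ∈ U), herase]
      omega
  have hrU : r ∈ U.map τ.toEmbedding := (hrange r).2 ⟨le_rfl, by omega⟩
  obtain ⟨p, hp, hmax⟩ : ∃ p ∈ U.map τ.toEmbedding, ∀ i ∈ U.map τ.toEmbedding, i ≤ p :=
    ⟨_, Finset.max'_mem _ ⟨r, hrU⟩, Finset.le_max' _⟩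
  have hIcc : U.map τ.toEmbedding = Finset.Icc r p := by
    ext i
    rw [Finset.mem_Icc]
    refine ⟨fun hi => ⟨((hrange i).1 hi).1, hmax i hi⟩, fun hi => (hrange i).2 ⟨hi.1, ?_⟩⟩
    exact lt_of_le_of_lt hi.2 ((hrange p).1 hp).2
  have hq' (j : Fin m) (hj : j ∈ Finset.Icc r p) : (q ∘ τ.symm) j = (q ∘ τ.symm) r := by
    rw [← hIcc, Finset.mem_map_equiv] at hj
    rw [Function.comp_apply, hq _ hj, Function.comp_apply, hτr']
  rw [hideal, map_one]
  rw [hideal, map_pow, rename_X, hτr] at hX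
  exact S.one_mem_of_Icc ((hrange p).1 hp).1 hq' hX (by rwa [← hIcc, Finset.card_map])

end AnnihilatorSystem

section Trapped

variable {m : ℕ} {q : Fin m → ℤ} {r : Fin m}

open Classical in
/-- The positions of the beads of the antigravity configuration `a_r(q)`. -/
noncomputable def trappedPositions (q : Fin m → ℤ) (r : Fin m) : Finset (Fin m) :=
  {k | Trapped (List.ofFn q) r k}

lemma mem_trappedPositions {k : Fin m} : k ∈ trappedPositions q r ↔ Trapped (List.ofFn q) r k := by
  simp [trappedPositions]

lemma heapRel_ofFn_iff {j k : Fin m} :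
    HeapRel (List.ofFn q) j k ↔ j < k ∧ (q j - q k).natAbs ≤ 1 := by
  simp [HeapRel]

lemma heapClosed_trappedPositions : HeapClosed q 0 (trappedPositions q r) := by
  refine fun k hk => ⟨k.val.zero_le, fun j _ hjk hq => ?_⟩
  rw [mem_trappedPositions] at hk ⊢
  exact .head (heapRel_ofFn_iff.2 ⟨hjk, hq⟩) hk

lemma mem_trappedRunners {k : Fin m} (hk : k ∈ trappedPositions q r) :
    q k ∈ trappedRunners (List.ofFn q) r := by
  rw [mem_trappedPositions] at hk
  exact Finset.mem_image.2 ⟨k, by simp [hk], by simp⟩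

end Trapped

theorem AnnihilatorSystem.X_pow_agBound_mem {m : ℕ} {Λ : ℤ →₀ ℕ} (S : AnnihilatorSystem m Λ)
    (q : Fin m → ℤ) (r : Fin m) : X r ^ agBound Λ (List.ofFn q) r ∈ S.ideal q :=
  S.X_pow_sum_mem_of_heapClosed heapClosed_trappedPositions
    (mem_trappedPositions.2 Relation.ReflTransGen.refl) fun _ => mem_trappedRunners

lemma heapClosed_erase_of_stack {m : ℕ} {q : Fin m → ℤ} {r : Fin m} {S : Finset (Fin m)}
    (hmin : ∀ k ∈ S, r ≤ k) (hrun : ∀ k ∈ S, q k = q r)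
    (hconsec : ∀ k : Fin m, r ≤ k → (∃ k' ∈ S, k ≤ k') → k ∈ S ∨ 2 ≤ (q k - q r).natAbs) :
    HeapClosed q (r + 1) (S.erase r) := by
  intro k hk
  obtain ⟨hkr, hkS⟩ := Finset.mem_erase.1 hk
  have hrk := hmin k hkS
  refine ⟨by omega, fun j hrj hjk hq => Finset.mem_erase.2 ⟨by omega, ?_⟩⟩
  rw [hrun k hkS] at hq
  exact (hconsec j (by omega) ⟨k, hkS, hjk.le⟩).resolve_right (by omega)

/-- If for some term `i_r` of the sequence `i` the
configuration `conf(i)` contains `b_r + 1` beads stacked consecutively on the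
runner `i_r` starting at position `r` (so the extra `b_r` beads lie above bead
`r`), where `b_r` is the `r`-antigravity bound, then `1_i = 0` in `R_ν^Λ`
(type `A_∞`). -/
theorem stacked_beads_above_anchor_idempotent_vanishes {m : ℕ} {A : Type}
    [Ring A] {Λ : ℤ →₀ ℕ} (K : CycKLR ℤ adjZ m A Λ) (q : Fin m → ℤ)
    (r : Fin m) (S : Finset (Fin m)) (hrS : r ∈ S) (hmin : ∀ k ∈ S, r ≤ k)
    (hcard : S.card = agBound Λ (List.ofFn q) r.val + 1)
    (hrun : ∀ k ∈ S, q k = q r)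
    (hconsec : ∀ k : Fin m, r ≤ k → (∃ k' ∈ S, k ≤ k') →
      k ∈ S ∨ 2 ≤ (q k - q r).natAbs) :
    K.e q = 0 := by
  let R := K.annihilatorSystem
  have hstack : HeapClosed q (r + 1) (S.erase r) := heapClosed_erase_of_stack hmin hrun hconsec
  have hone : 1 ∈ R.ideal q :=
    R.one_mem_of_stack hrS hstack hrun (R.X_pow_agBound_mem q r) (by omega)
  simpa using K.mem_annihilator.1 hone

end KLRPaper
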